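/- Let n ≥ 1 be an integer and let a be a measurable map from ℝⁿ to the symmetric n×n real matrices such that λ‖ξ‖² ≤ ⟨a(x)ξ, ξ⟩ ≤ Λ‖ξ‖² for all x, ξ ∈ ℝⁿ, where 0 < λ ≤ Λ, and additionally λ₀‖ξ‖² ≤ ⟨a(x)ξ, ξ⟩ ≤ Λ₀‖ξ‖² for all ξ and all x with ‖x‖ ≥ r₀, where λ ≤ λ₀ ≤ Λ₀ ≤ Λ and r₀ ≥ 0. Then for every r > r₀ and every ε > 0 there exist a smooth map b from ℝⁿ to the symmetric n×n real matrices and a measurable set 𝒜 ⊆ B(r) with Lebesgue measure at most ε such that: λ‖ξ‖² ≤ ⟨b(x)ξ, ξ⟩ ≤ Λ‖ξ‖² for all ξ and all x ∈ B(r); ‖a(x) − b(x)‖ < ε for all x ∈ B(r) \ 𝒜; and λ₀‖ξ‖² ≤ ⟨b(x)ξ, ξ⟩ ≤ Λ₀‖ξ‖² for all ξ and all x ∈ B(r) \ B(r₀). -/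

import Mathlib

open MeasureTheory Matrix

noncomputable section

/-- The squared Euclidean norm of a vector in `Fin n → ℝ`. -/
def sqnorm {n : ℕ} (ξ : Fin n → ℝ) : ℝ := ∑ i, ξ i ^ 2

/-- The Euclidean norm of a vector in `Fin n → ℝ`. -/
def enorm' {n : ℕ} (x : Fin n → ℝ) : ℝ := Real.sqrt (sqnorm x)

/-- The open Euclidean ball of radius `r` centered at the origin of `ℝⁿ`. -/
def eball (n : ℕ) (r : ℝ) : Set (Fin n → ℝ) := {x | enorm' x < r}

/-!
By Lusin's theorem `a` is continuous on a closed set `C` that contains the ball up to a set of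
small measure. At each point `x` ask `b` to take its value in the convex set of matrices that
satisfy the ellipticity bounds imposed at `x` and, if `x ∈ C`, lie within `ε` of `a x`. The constant
matrix `a x` meets the demands made at all points near `x`: on `C` by continuity, and for the
ellipticity bounds because the stronger ones are imposed on a closed set. A smooth partition of
unity glues these local constant solutions to a global one.
-/

open Topology TopologicalSpace
open scoped ContDiff Matrix.Norms.L2Operator

section Lusin

variable {X Y : Type*} [TopologicalSpace X] [MeasurableSpace X] [TopologicalSpace Y]
  [SecondCountableTopology Y] [MeasurableSpace Y] [OpensMeasurableSpace Y]

theorem exists_isClosed_continuousOn_measure_compl_lt {μ : Measure X} [IsFiniteMeasure μ]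
    [μ.OuterRegular] {f : X → Y} (hf : Measurable f) {δ : ENNReal} (hδ : δ ≠ 0) :
    ∃ C, IsClosed C ∧ μ Cᶜ < δ ∧ ContinuousOn f C := by
  -- Preimages of basic open sets are open up to small defects; remove an open cover of the defects.
  obtain ⟨η, hη_pos, hη_sum⟩ := ENNReal.exists_pos_sum_of_countable' hδ (countableBasis Y)
  have preimage_almost_open (V : countableBasis Y) :
      ∃ U ⊇ f ⁻¹' V, IsOpen U ∧ μ U < ⊤ ∧ μ (U \ f ⁻¹' V) < η V :=
    (hf (isOpen_of_mem_countableBasis V.2).measurableSet).exists_isOpen_sdiff_lt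
      (measure_ne_top μ _) (hη_pos V).ne'
  choose U hU_sup hU_open _ hU_lt using preimage_almost_open
  have defect_lt : μ (⋃ V, U V \ f ⁻¹' V) < δ :=
    calc μ (⋃ V, U V \ f ⁻¹' V) ≤ ∑' V, μ (U V \ f ⁻¹' V) := measure_iUnion_le _
      _ ≤ ∑' V, η V := ENNReal.tsum_le_tsum fun V => (hU_lt V).le
      _ < δ := hη_sum
  obtain ⟨W, hW_sup, hW_open, hW_lt⟩ := Set.exists_isOpen_lt_of_lt _ _ defect_lt
  refine ⟨Wᶜ, hW_open.isClosed_compl, by rwa [compl_compl], ?_⟩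
  refine (isBasis_countableBasis Y).continuousOn_iff.2 fun V hV => ⟨U ⟨V, hV⟩, hU_open _, ?_⟩
  refine subset_antisymm (Set.inter_subset_inter_left _ (hU_sup ⟨V, hV⟩)) fun x hx => ⟨?_, hx.2⟩
  by_contra hxV
  exact hx.2 (hW_sup (Set.mem_iUnion.2 ⟨⟨V, hV⟩, hx.1, hxV⟩))

end Lusin

section ConvexConstraint

variable {E F : Type*} [NormedAddCommGroup E] [NormedSpace ℝ E] [FiniteDimensional ℝ E]
  [NormedAddCommGroup F] [NormedSpace ℝ F] {f : E → F} {K : E → Set F}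

theorem exists_contDiff_mem_norm_sub_lt_of_continuousOn {C : Set E} (hf : ContinuousOn f C)
    (hC : IsClosed C) (hK : ∀ x, Convex ℝ (K x)) (hfK : ∀ x, ∀ᶠ y in 𝓝 x, f x ∈ K y)
    {ε : ℝ} (hε : 0 < ε) :
    ∃ g : E → F, ContDiff ℝ ∞ g ∧ (∀ x, g x ∈ K x) ∧ ∀ x ∈ C, ‖f x - g x‖ < ε := by
  let t (x : E) : Set F := K x ∩ ⋂ _ : x ∈ C, Metric.ball (f x) ε
  have convex_t (x : E) : Convex ℝ (t x) :=
    (hK x).inter (convex_iInter fun _ : x ∈ C => convex_ball (f x) ε)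
  have eventually_near (x : E) : ∀ᶠ y in 𝓝 x, f x ∈ ⋂ _ : y ∈ C, Metric.ball (f y) ε := by
    by_cases hx : x ∈ C
    · filter_upwards [eventually_nhdsWithin_iff.1 ((hf x hx).eventually
        (Metric.ball_mem_nhds (f x) hε))] with y hy
      exact Set.mem_iInter.2 fun hyC => Metric.mem_ball_comm.1 (hy hyC)
    · filter_upwards [hC.isOpen_compl.mem_nhds hx] with y hy
      exact Set.mem_iInter.2 fun hyC => absurd hyC hy
  obtain ⟨g, hg⟩ := exists_contMDiffMap_forall_mem_convex_of_local_const (n := ⊤)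
    (modelWithCornersSelf ℝ E) convex_t fun x => ⟨f x, (hfK x).and (eventually_near x)⟩
  refine ⟨g, g.contMDiff.contDiff, fun x => (hg x).1, fun x hx => ?_⟩
  rw [← dist_eq_norm]
  exact Metric.mem_ball'.1 (Set.mem_iInter.1 (hg x).2 hx)

theorem exists_contDiff_mem_norm_sub_lt_of_measurable [MeasurableSpace E] [BorelSpace E]
    [SecondCountableTopology F] [MeasurableSpace F] [OpensMeasurableSpace F] {μ : Measure E}
    (hf : Measurable f) (hK : ∀ x, Convex ℝ (K x)) (hfK : ∀ x, ∀ᶠ y in 𝓝 x, f x ∈ K y)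
    {s : Set E} (hs : MeasurableSet s) (hμs : μ s ≠ ⊤)
    {ε : ℝ} (hε : 0 < ε) {δ : ENNReal} (hδ : δ ≠ 0) :
    ∃ (g : E → F) (N : Set E), ContDiff ℝ ∞ g ∧ (∀ x, g x ∈ K x) ∧
      MeasurableSet N ∧ N ⊆ s ∧ μ N ≤ δ ∧ ∀ x ∈ s \ N, ‖f x - g x‖ < ε := by
  have : IsFiniteMeasure (μ.restrict s) := isFiniteMeasure_restrict.2 hμs
  obtain ⟨C, hC, hμC, hfC⟩ :=
    exists_isClosed_continuousOn_measure_compl_lt (μ := μ.restrict s) hf hδ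
  obtain ⟨g, hg, hgK, hgf⟩ := exists_contDiff_mem_norm_sub_lt_of_continuousOn hfC hC hK hfK hε
  refine ⟨g, s \ C, hg, hgK, hs.diff hC.measurableSet, Set.sdiff_subset, ?_, fun x hx => ?_⟩
  · rw [Set.sdiff_eq_compl_inter, ← Measure.restrict_apply hC.measurableSet.compl]
    exact hμC.le
  · exact hgf x (by_contra fun hxC => hx.2 ⟨hx.1, hxC⟩)

end ConvexConstraint

/-- The symmetric matrices with ellipticity constants `l` and `L`, that is, whose quadratic form
lies between `l * sqnorm` and `L * sqnorm`: the values allowed to a coefficient field. The constants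
may have any sign. -/
def ellipticMatrices (n : ℕ) (l L : ℝ) : Set (Matrix (Fin n) (Fin n) ℝ) :=
  {A | A.IsSymm ∧ ∀ ξ, l * sqnorm ξ ≤ ξ ⬝ᵥ A.mulVec ξ ∧ ξ ⬝ᵥ A.mulVec ξ ≤ L * sqnorm ξ}

lemma convex_ellipticMatrices (n : ℕ) (l L : ℝ) : Convex ℝ (ellipticMatrices n l L) := by
  have convex_isSymm : Convex ℝ {A : Matrix (Fin n) (Fin n) ℝ | A.IsSymm} :=
    fun A hA B hB s t _ _ _ => (hA.smul s).add (hB.smul t)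
  have isLinearMap_form (ξ : Fin n → ℝ) :
      IsLinearMap ℝ fun A : Matrix (Fin n) (Fin n) ℝ => ξ ⬝ᵥ A.mulVec ξ :=
    ⟨by simp [add_mulVec], by simp [smul_mulVec]⟩
  have convex_bounds : Convex ℝ (⋂ ξ : Fin n → ℝ,
      (fun A : Matrix (Fin n) (Fin n) ℝ => ξ ⬝ᵥ A.mulVec ξ) ⁻¹'
        Set.Icc (l * sqnorm ξ) (L * sqnorm ξ)) :=
    convex_iInter fun ξ => (convex_Icc _ _).is_linear_preimage (isLinearMap_form ξ)
  simpa [ellipticMatrices, Set.ofPred_and, Set.ofPred_forall, Set.preimage, Set.Icc] using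
    convex_isSymm.inter convex_bounds

lemma eball_eq_preimage_ball (n : ℕ) (r : ℝ) :
    eball n r = WithLp.toLp 2 ⁻¹' Metric.ball (0 : EuclideanSpace ℝ (Fin n)) r := by
  ext x
  simp [eball, enorm', sqnorm, EuclideanSpace.norm_eq]

lemma isOpen_eball (n : ℕ) (r : ℝ) : IsOpen (eball n r) := by
  rw [eball_eq_preimage_ball]
  exact Metric.isOpen_ball.preimage (PiLp.continuous_toLp 2 _)

lemma volume_eball_ne_top (n : ℕ) (r : ℝ) : volume (eball n r) ≠ ⊤ := by
  rw [eball_eq_preimage_ball, (PiLp.volume_preserving_toLp (Fin n)).measure_preimage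
    measurableSet_ball.nullMeasurableSet]
  exact measure_ball_lt_top.ne

theorem smooth_approximation_elliptic_coefficients_general {n : ℕ} {E : Type*}
    [NormedAddCommGroup E] [NormedSpace ℝ E] [FiniteDimensional ℝ E] [MeasurableSpace E]
    [BorelSpace E] {μ : Measure E} {a : E → Matrix (Fin n) (Fin n) ℝ}
    (ha : ∀ i j, Measurable fun x => a x i j) {l L l₀ L₀ : ℝ}
    (hell : ∀ x, a x ∈ ellipticMatrices n l L)
    {U : Set E} (hU : IsOpen U) (hell₀ : ∀ x ∉ U, a x ∈ ellipticMatrices n l₀ L₀)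
    {s : Set E} (hs : MeasurableSet s) (hμs : μ s ≠ ⊤)
    {ε : ℝ} (hε : 0 < ε) {δ : ENNReal} (hδ : δ ≠ 0) :
    ∃ (b : E → Matrix (Fin n) (Fin n) ℝ) (N : Set E),
      (∀ i j, ContDiff ℝ ∞ fun x => b x i j) ∧
      (∀ x, b x ∈ ellipticMatrices n l L) ∧ (∀ x ∉ U, b x ∈ ellipticMatrices n l₀ L₀) ∧
      MeasurableSet N ∧ N ⊆ s ∧ μ N ≤ δ ∧
      ∀ x ∈ s \ N, ‖Matrix.toEuclideanCLM (𝕜 := ℝ) (a x - b x)‖ < ε := by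
  borelize (Matrix (Fin n) (Fin n) ℝ)
  have continuous_of : Continuous (Matrix.of : (Fin n → Fin n → ℝ) → Matrix (Fin n) (Fin n) ℝ) :=
    continuous_id
  have measurable_a : Measurable a :=
    continuous_of.measurable.comp (measurable_pi_iff.2 fun i => measurable_pi_iff.2 (ha i))
  let K (x : E) : Set (Matrix (Fin n) (Fin n) ℝ) :=
    ellipticMatrices n l L ∩ ⋂ _ : x ∉ U, ellipticMatrices n l₀ L₀
  have convex_K (x : E) : Convex ℝ (K x) :=
    (convex_ellipticMatrices n l L).inter
      (convex_iInter fun _ : x ∉ U => convex_ellipticMatrices n l₀ L₀)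
  have eventually_mem_K (x : E) : ∀ᶠ y in 𝓝 x, a x ∈ K y := by
    by_cases hx : x ∈ U
    · filter_upwards [hU.mem_nhds hx] with y hy
      exact ⟨hell x, Set.mem_iInter.2 fun hyU => absurd hy hyU⟩
    · exact .of_forall fun _ => ⟨hell x, Set.mem_iInter.2 fun _ => hell₀ x hx⟩
  obtain ⟨b, N, hb, hbK, hN⟩ := exists_contDiff_mem_norm_sub_lt_of_measurable (μ := μ)
    measurable_a convex_K eventually_mem_K hs hμs hε hδ
  exact ⟨b, N, fun i j => (entryLinearMap ℝ ℝ i j).toContinuousLinearMap.contDiff.comp hb,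
    fun x => (hbK x).1, fun x => Set.mem_iInter.1 (hbK x).2, hN⟩

/-- **Smooth approximation of measurable elliptic coefficients.** Given a measurable
symmetric uniformly elliptic matrix-valued map `a` with ellipticity bounds `λ ≤ Λ`
everywhere and bounds `λ₀ ≤ Λ₀` outside the ball of radius `r₀`, for every `r > r₀`
and `ε > 0` there exist a smooth symmetric matrix-valued map `b` and a measurable set
`𝒜 ⊆ B(r)` of measure at most `ε` such that `b` satisfies the bounds `λ ≤ Λ` on `B(r)`,
agrees with `a` up to `ε` in operator norm on `B(r) \ 𝒜`, and satisfies the bounds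
`λ₀ ≤ Λ₀` on `B(r) \ B(r₀)`. -/
theorem smooth_approximation_elliptic_coefficients
    (n : ℕ) (hn : 1 ≤ n)
    (a : (Fin n → ℝ) → Matrix (Fin n) (Fin n) ℝ)
    (hameas : ∀ i j, Measurable fun x => a x i j)
    (hasymm : ∀ x, (a x).IsSymm)
    (lam lam₀ Lam₀ Lam : ℝ) (hlam : 0 < lam) (h₁ : lam ≤ lam₀) (h₂ : lam₀ ≤ Lam₀)
    (h₃ : Lam₀ ≤ Lam)
    (r₀ : ℝ) (hr₀ : 0 ≤ r₀)
    (hell : ∀ x ξ, lam * sqnorm ξ ≤ ξ ⬝ᵥ (a x).mulVec ξ ∧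
      ξ ⬝ᵥ (a x).mulVec ξ ≤ Lam * sqnorm ξ)
    (hell₀ : ∀ x, r₀ ≤ enorm' x → ∀ ξ, lam₀ * sqnorm ξ ≤ ξ ⬝ᵥ (a x).mulVec ξ ∧
      ξ ⬝ᵥ (a x).mulVec ξ ≤ Lam₀ * sqnorm ξ)
    (r : ℝ) (hr : r₀ < r) (ε : ℝ) (hε : 0 < ε) :
    ∃ b : (Fin n → ℝ) → Matrix (Fin n) (Fin n) ℝ, ∃ 𝒜 : Set (Fin n → ℝ),
      (∀ i j, ContDiff ℝ (⊤ : ℕ∞) fun x => b x i j) ∧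
      (∀ x, (b x).IsSymm) ∧
      MeasurableSet 𝒜 ∧ 𝒜 ⊆ eball n r ∧ volume 𝒜 ≤ ENNReal.ofReal ε ∧
      (∀ x ∈ eball n r, ∀ ξ, lam * sqnorm ξ ≤ ξ ⬝ᵥ (b x).mulVec ξ ∧
        ξ ⬝ᵥ (b x).mulVec ξ ≤ Lam * sqnorm ξ) ∧
      (∀ x ∈ eball n r \ 𝒜, ‖Matrix.toEuclideanCLM (𝕜 := ℝ) (a x - b x)‖ < ε) ∧
      (∀ x ∈ eball n r \ eball n r₀, ∀ ξ, lam₀ * sqnorm ξ ≤ ξ ⬝ᵥ (b x).mulVec ξ ∧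
        ξ ⬝ᵥ (b x).mulVec ξ ≤ Lam₀ * sqnorm ξ) := by
  obtain ⟨b, 𝒜, hb, hbell, hbell₀, h𝒜, h𝒜_sub, h𝒜_vol, hab⟩ :=
    smooth_approximation_elliptic_coefficients_general hameas (fun x => ⟨hasymm x, hell x⟩)
      (isOpen_eball n r₀) (fun x hx => ⟨hasymm x, hell₀ x (not_lt.1 hx)⟩)
      (isOpen_eball n r).measurableSet (volume_eball_ne_top n r) hε (ENNReal.ofReal_pos.2 hε).ne'
  exact ⟨b, 𝒜, hb, fun x => (hbell x).1, h𝒜, h𝒜_sub, h𝒜_vol, fun x _ => (hbell x).2, hab,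
    fun x hx => (hbell₀ x hx.2).2⟩

end
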